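/- For every i ∈ {0,1,2,3}, every integer k ≥ 0 and ε = ±1 with (i,k,ε) ∉ {(0,0,1), (0,0,−1), (0,1,1), (0,1,−1), (1,0,1), (1,0,−1), (2,0,1), (2,0,−1)}, the Lehmer pair associated with (a,b) = (ζ^{(i)}_{k−ε}, −ζ^{(i)}_{k+ε}) is a 12-defective Lehmer pair. -/

import Mathlib

open Complex

/-- A fixed choice of complex square root of an integer. -/
noncomputable def csqrt (a : ℤ) : ℂ := (a : ℂ) ^ ((1 : ℂ) / 2)

/-- First component of the Lehmer pair associated with `(a, b)`: `(√a - √b)/2`. -/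
noncomputable def assocFst (a b : ℤ) : ℂ := (csqrt a - csqrt b) / 2

/-- Second component of the Lehmer pair associated with `(a, b)`: `(√a + √b)/2`. -/
noncomputable def assocSnd (a b : ℤ) : ℂ := (csqrt a + csqrt b) / 2

/-- `(α, β)` is a Lehmer pair: `α`, `β` are algebraic integers, `(α+β)^2` and `αβ` are
nonzero coprime rational integers, and `α/β` is not a root of unity. -/
def IsLehmerPair (α β : ℂ) : Prop :=
  IsIntegral ℤ α ∧ IsIntegral ℤ β ∧
  (∃ p q : ℤ, ((α + β) ^ 2 = (p : ℂ)) ∧ (α * β = (q : ℂ)) ∧ p ≠ 0 ∧ q ≠ 0 ∧ IsCoprime p q) ∧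
  ¬ ∃ n : ℕ, 0 < n ∧ (α / β) ^ n = 1

/-- The Lehmer numbers `ũ_n(α, β)`. -/
noncomputable def lehmerU (α β : ℂ) (n : ℕ) : ℂ :=
  if Odd n then (α ^ n - β ^ n) / (α - β) else (α ^ n - β ^ n) / (α ^ 2 - β ^ 2)

/-- `z` is an integer divisible by `ℓ`. -/
def IntDvd (ℓ : ℕ) (z : ℂ) : Prop := ∃ m : ℤ, (m : ℂ) = z ∧ (ℓ : ℤ) ∣ m

/-- `ℓ` is a primitive divisor of `ũ_n(α, β)`: `ℓ` is a prime dividing `ũ_n(α, β)` but not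
dividing `(α^2 - β^2)^2 ũ_1(α,β) ⋯ ũ_{n-1}(α,β)`. -/
def IsPrimitiveDivisor (ℓ : ℕ) (n : ℕ) (α β : ℂ) : Prop :=
  ℓ.Prime ∧ IntDvd ℓ (lehmerU α β n) ∧
  ¬ IntDvd ℓ ((α ^ 2 - β ^ 2) ^ 2 * ∏ i ∈ Finset.Ico 1 n, lehmerU α β i)

/-- `(α, β)` is an `n`-defective Lehmer pair: a Lehmer pair such that `ũ_n(α, β)` has no
primitive divisor. -/
def IsDefective (n : ℕ) (α β : ℂ) : Prop :=
  IsLehmerPair α β ∧ ∀ ℓ : ℕ, ¬ IsPrimitiveDivisor ℓ n α β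

/-- Two Lehmer pairs `(α₁, β₁)` and `(α₂, β₂)` are equivalent if
`α₁/α₂ = β₁/β₂ ∈ {1, -1, i, -i}`. -/
def LehmerEquiv (α₁ β₁ α₂ β₂ : ℂ) : Prop :=
  ∃ c : ℂ, (c = 1 ∨ c = -1 ∨ c = Complex.I ∨ c = -Complex.I) ∧ α₁ = c * α₂ ∧ β₁ = c * β₂

/-- `phiAux n = φ_{n-2}`: the Fibonacci sequence shifted so as to start at index `-2`. -/
def phiAux : ℕ → ℤ
  | 0 => -1
  | 1 => 1
  | n + 2 => phiAux (n + 1) + phiAux n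

/-- `φ_k` for integer `k ≥ -2`: `φ_{-2} = -1`, `φ_{-1} = 1`, `φ_{k+1} = φ_k + φ_{k-1}`. -/
def phi (k : ℤ) : ℤ := phiAux (k + 2).toNat

/-- `psiAux n = ψ_{n-2}`: the Lucas sequence shifted so as to start at index `-2`. -/
def psiAux : ℕ → ℤ
  | 0 => 3
  | 1 => -1
  | n + 2 => psiAux (n + 1) + psiAux n

/-- `ψ_k` for integer `k ≥ -2`: `ψ_{-2} = 3`, `ψ_{-1} = -1`, `ψ_{k+1} = ψ_k + ψ_{k-1}`. -/
def psi (k : ℤ) : ℤ := psiAux (k + 2).toNat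

/-- `piAux n = π_{n-1}`. -/
def piAux : ℕ → ℤ
  | 0 => 1
  | 1 => 0
  | n + 2 => 2 * piAux (n + 1) + piAux n

/-- `π_k` for integer `k ≥ -1`: `π_{-1} = 1`, `π_0 = 0`, `π_{k+1} = 2π_k + π_{k-1}`. -/
def piSeq (k : ℤ) : ℤ := piAux (k + 1).toNat

/-- `rhoAux n = ρ_{n-1}`. -/
def rhoAux : ℕ → ℤ
  | 0 => -1
  | 1 => 1
  | n + 2 => 2 * rhoAux (n + 1) + rhoAux n

/-- `ρ_k` for integer `k ≥ -1`: `ρ_{-1} = -1`, `ρ_0 = 1`, `ρ_{k+1} = 2ρ_k + ρ_{k-1}`. -/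
def rhoSeq (k : ℤ) : ℤ := rhoAux (k + 1).toNat

/-- `zetaAux i n = ζ^{(i)}_{n-1}`. -/
def zetaAux (i : ℕ) : ℕ → ℤ
  | 0 => if i = 0 then -1 else if i = 1 then 2 else if i = 2 then 1 else -1
  | 1 => if i = 0 then 0 else 1
  | n + 2 => 4 * zetaAux i (n + 1) - zetaAux i n

/-- `ζ^{(i)}_k` for integer `k ≥ -1`, satisfying `ζ^{(i)}_{k+1} = 4ζ^{(i)}_k - ζ^{(i)}_{k-1}`
with initial values `(ζ^{(i)}_{-1}, ζ^{(i)}_0)` equal to `(-1, 0)`, `(2, 1)`, `(1, 1)`,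
`(-1, 1)` for `i = 0, 1, 2, 3` respectively. -/
def zeta (i : ℕ) (k : ℤ) : ℤ := zetaAux i (k + 1).toNat

/-- The Lehmer numbers as integers in terms of `p = (α+β)^2` and `q = αβ`. -/
def lehmerInt (p q : ℤ) : ℕ → ℤ
  | 0 => 0
  | 1 => 1
  | n + 2 => (if Even n then lehmerInt p q (n + 1) else p * lehmerInt p q (n + 1))
      - q * lehmerInt p q n

lemma csqrt_sq (a : ℤ) : csqrt a ^ 2 = (a : ℂ) := by
  have := Complex.cpow_nat_inv_pow (a : ℂ) (n := 2) (by norm_num)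
  simpa [csqrt] using this

lemma lehmerU_mul (α β : ℂ) (h : α ^ 2 - β ^ 2 ≠ 0) (n : ℕ) :
    lehmerU α β n * (if Odd n then α - β else α ^ 2 - β ^ 2) = α ^ n - β ^ n := by
  have h1 : α - β ≠ 0 := fun h0 => h (by linear_combination (α + β) * h0)
  unfold lehmerU
  split_ifs
  · field_simp
  · field_simp

lemma lehmerU_rec (α β : ℂ) (p q : ℤ) (hp : (α + β) ^ 2 = p) (hq : α * β = q)
    (h : α ^ 2 - β ^ 2 ≠ 0) (n : ℕ) :
    lehmerU α β (n + 2) = (if Even n then lehmerU α β (n + 1) else p * lehmerU α β (n + 1))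
      - q * lehmerU α β n := by
  have h1 : α - β ≠ 0 := fun h0 => h (by linear_combination (α + β) * h0)
  have e0 := lehmerU_mul α β h n
  have e1 := lehmerU_mul α β h (n + 1)
  have e2 := lehmerU_mul α β h (n + 2)
  have key : α ^ (n + 2) - β ^ (n + 2)
      = (α + β) * (α ^ (n + 1) - β ^ (n + 1)) - α * β * (α ^ n - β ^ n) := by ring
  rw [← e0, ← e1, ← e2] at key
  rcases Nat.even_or_odd n with hn | hn
  · have a0 : ¬ Odd n := by simpa using hn
    have a1 : Odd (n + 1) := hn.add_one
    have a2 : ¬ Odd (n + 2) := by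
      rw [Nat.not_odd_iff_even]; exact hn.add (by decide)
    simp only [a0, a1, a2, if_true, if_false] at key
    simp only [hn, if_true]
    apply mul_right_cancel₀ h
    rw [key, ← hq]; ring
  · have a0 : ¬ Even n := by simpa using hn
    have a1 : ¬ Odd (n + 1) := by
      rw [Nat.not_odd_iff_even]; exact hn.add_one
    have a2 : Odd (n + 2) := hn.add_even (by decide)
    simp only [hn, a1, a2, if_true, if_false] at key
    simp only [a0, if_false]
    apply mul_right_cancel₀ h1
    rw [key, ← hq, ← hp]; ring

lemma lehmerU_eq (α β : ℂ) (p q : ℤ) (hp : (α + β) ^ 2 = p) (hq : α * β = q)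
    (h : α ^ 2 - β ^ 2 ≠ 0) (n : ℕ) :
    lehmerU α β n = (lehmerInt p q n : ℤ) ∧ lehmerU α β (n + 1) = (lehmerInt p q (n + 1) : ℤ) := by
  have h1 : α - β ≠ 0 := fun h0 => h (by linear_combination (α + β) * h0)
  induction n with
  | zero =>
    constructor
    · simp [lehmerU, lehmerInt]
    · simp [lehmerU, lehmerInt, h1]
  | succ n ih =>
    refine ⟨ih.2, ?_⟩
    rw [lehmerU_rec α β p q hp hq h n, lehmerInt, ih.1, ih.2]
    split_ifs <;> push_cast <;> ring

lemma integral_aux (α : ℂ) (r s : ℤ) (h : α ^ 4 - r * α ^ 2 + s = 0) : IsIntegral ℤ α := by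
  refine ⟨Polynomial.X ^ 4 - Polynomial.C r * Polynomial.X ^ 2 + Polynomial.C s, ?_, ?_⟩
  · monicity!
  · simp only [Polynomial.eval₂_add, Polynomial.eval₂_sub, Polynomial.eval₂_mul, Polynomial.eval₂_C,
      Polynomial.eval₂_X_pow]
    simpa using h

lemma not_root_aux (α β : ℂ) (p q : ℤ) (hp : (α + β) ^ 2 = p) (hq : α * β = q)
    (hc : IsCoprime p q) (hcase : 2 ≤ q ∨ (q = 1 ∧ (p = -1 ∨ p = 5))) (n : ℕ) (hn : 0 < n)
    (hr : (α / β) ^ n = 1) : False := by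
  have hq0 : q ≠ 0 := by rcases hcase with h | h <;> omega
  have hqC : (q : ℂ) ≠ 0 := by exact_mod_cast hq0
  have hα : α ≠ 0 := by rintro rfl; simp at hq; exact hqC hq.symm
  have hβ : β ≠ 0 := by rintro rfl; simp at hq; exact hqC hq.symm
  have hsum : (q : ℂ) * (α / β + (α / β)⁻¹) = ((p - 2 * q : ℤ) : ℂ) := by
    push_cast
    rw [← hp, ← hq]; field_simp; ring
  have hi1 : IsIntegral ℤ (α / β) := IsIntegral.of_pow hn (by rw [hr]; exact isIntegral_one)
  have hi2 : IsIntegral ℤ (α / β)⁻¹ :=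
    IsIntegral.of_pow hn (by rw [inv_pow, hr, inv_one]; exact isIntegral_one)
  rcases hcase with h2 | ⟨rfl, h⟩
  · have hi := hi1.add hi2
    have e : α / β + (α / β)⁻¹ = algebraMap ℚ ℂ ((p - 2 * q : ℤ) / (q : ℚ)) := by
      rw [map_div₀, map_intCast, map_intCast, eq_div_iff hqC, mul_comm]; exact hsum
    rw [e, isIntegral_algebraMap_iff (algebraMap ℚ ℂ).injective,
      IsIntegrallyClosed.isIntegral_iff] at hi
    obtain ⟨y, hy⟩ := hi
    have hq' : (q : ℚ) ≠ 0 := by exact_mod_cast hq0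
    rw [eq_div_iff hq', eq_intCast] at hy
    have hy' : y * q = p - 2 * q := by exact_mod_cast hy
    have hd : q ∣ p := ⟨y + 2, by linear_combination -hy'⟩
    have := hc.symm.isUnit_of_dvd' dvd_rfl hd
    rcases Int.isUnit_iff.1 this with h | h <;> omega
  · have hnorm : ‖α / β‖ = 1 := by
      have := congrArg norm hr
      rw [norm_pow, norm_one] at this
      exact (pow_eq_one_iff_of_nonneg (norm_nonneg _) hn.ne').1 this
    have hle : ‖α / β + (α / β)⁻¹‖ ≤ 2 := by
      refine (norm_add_le _ _).trans ?_
      rw [norm_inv, hnorm]; norm_num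
    simp only [Int.cast_one, one_mul] at hsum
    rw [hsum, Complex.norm_intCast] at hle
    rcases h with rfl | rfl <;> norm_num at hle

lemma main_aux (p q : ℤ) (hc : IsCoprime p q)
    (hcase : 2 ≤ q ∨ (q = 1 ∧ (p = -1 ∨ p = 5))) (hdvd : p ^ 2 - 4 * p * q + q ^ 2 ∣ 6) :
    IsDefective 12 (assocFst p (p - 4 * q)) (assocSnd p (p - 4 * q)) := by
  have hq0 : q ≠ 0 := by rcases hcase with h | h <;> omega
  have hnd : 2 ≤ q → ¬ q ∣ p := fun h2 hd => by
    have := hc.symm.isUnit_of_dvd' dvd_rfl hd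
    rcases Int.isUnit_iff.1 this with h | h <;> omega
  have hp0 : p ≠ 0 := by
    rcases hcase with h | h
    · rintro rfl; exact hnd h (dvd_zero _)
    · omega
  have hb0 : p - 4 * q ≠ 0 := by
    rcases hcase with h | h
    · intro h0; exact hnd h ⟨4, by linarith⟩
    · omega
  have ha := csqrt_sq p
  have hb := csqrt_sq (p - 4 * q)
  push_cast at hb
  generalize hα : assocFst p (p - 4 * q) = α
  generalize hβ : assocSnd p (p - 4 * q) = β
  have hp : (α + β) ^ 2 = p := by
    rw [← hα, ← hβ, ← ha, assocFst, assocSnd]; ring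
  have hq : α * β = q := by
    rw [← hα, ← hβ, assocFst, assocSnd]; linear_combination (ha - hb) / 4
  have hD : (α ^ 2 - β ^ 2) ^ 2 = ((p * (p - 4 * q) : ℤ) : ℂ) := by
    push_cast; rw [← hp, ← hq]; ring
  have h0 : α ^ 2 - β ^ 2 ≠ 0 := by
    intro h
    rw [h] at hD
    have : p * (p - 4 * q) = 0 := by
      have h' : ((p * (p - 4 * q) : ℤ) : ℂ) = 0 := by rw [← hD]; norm_num
      exact_mod_cast h'
    rcases mul_eq_zero.1 this with h | h
    exacts [hp0 h, hb0 h]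
  refine ⟨⟨?_, ?_, ⟨p, q, hp, hq, hp0, hq0, hc⟩, ?_⟩, ?_⟩
  · apply integral_aux α (p - 2 * q) (q ^ 2)
    push_cast; rw [← hp, ← hq]; ring
  · apply integral_aux β (p - 2 * q) (q ^ 2)
    push_cast; rw [← hp, ← hq]; ring
  · rintro ⟨n, hn, hr⟩
    exact not_root_aux α β p q hp hq hc hcase n hn hr
  · rintro ℓ ⟨hℓ, ⟨m, hm, hlm⟩, hno⟩
    apply hno
    have hU := fun n => (lehmerU_eq α β p q hp hq h0 n).1
    refine ⟨p * (p - 4 * q) * ∏ i ∈ Finset.Ico 1 12, lehmerInt p q i, ?_, ?_⟩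
    · rw [hD]; push_cast; simp only [hU]
    have hℓ' : Prime (ℓ : ℤ) := Nat.prime_iff_prime_int.1 hℓ
    have hmem : ∀ j, j ∈ Finset.Ico 1 12 → (ℓ : ℤ) ∣ lehmerInt p q j →
        (ℓ : ℤ) ∣ p * (p - 4 * q) * ∏ i ∈ Finset.Ico 1 12, lehmerInt p q i :=
      fun j hj hd => Dvd.dvd.mul_left (hd.trans (Finset.dvd_prod_of_mem _ hj)) _
    rw [hU] at hm
    have hm' : m = lehmerInt p q 12 := by exact_mod_cast hm
    have e3 : lehmerInt p q 3 = p - q := by simp [lehmerInt]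
    have e4 : lehmerInt p q 4 = p - 2 * q := by
      simp [lehmerInt, show Even 2 by decide]; ring
    have e12 : lehmerInt p q 12
        = lehmerInt p q 4 * lehmerInt p q 6 * (p ^ 2 - 4 * p * q + q ^ 2) := by
      simp [lehmerInt, Nat.even_add_one, parity_simps]; ring
    rw [hm', e12] at hlm
    rcases hℓ'.dvd_or_dvd hlm with h | h
    · rcases hℓ'.dvd_or_dvd h with h | h
      · exact hmem 4 (by simp) h
      · exact hmem 6 (by simp) h
    · have h6 : (ℓ : ℤ) ∣ 2 * 3 := h.trans hdvd
      rcases hℓ'.dvd_or_dvd h6 with h' | h'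
      · have : ℓ = 2 := (Nat.prime_dvd_prime_iff_eq hℓ Nat.prime_two).1 (by exact_mod_cast h')
        subst this
        apply hmem 3 (by simp)
        rw [e3]
        have hsq : (2 : ℤ) ∣ (p - q) ^ 2 := by
          obtain ⟨c, hc⟩ := h
          exact ⟨c + p * q, by push_cast at hc; linear_combination hc⟩
        exact_mod_cast Int.prime_two.dvd_of_dvd_pow hsq
      · have : ℓ = 3 := (Nat.prime_dvd_prime_iff_eq hℓ Nat.prime_three).1 (by exact_mod_cast h')
        subst this
        apply hmem 4 (by simp)
        rw [e4]
        have hsq : (3 : ℤ) ∣ (p - 2 * q) ^ 2 := by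
          obtain ⟨c, hc⟩ := h
          exact ⟨c + q ^ 2, by push_cast at hc; linear_combination hc⟩
        exact_mod_cast Int.prime_three.dvd_of_dvd_pow hsq

lemma zetaAux_coprime (i n : ℕ) : IsCoprime (zetaAux i n) (zetaAux i (n + 1)) := by
  induction n with
  | zero =>
    by_cases h : i = 0
    · subst h; exact ⟨-1, 0, by simp [zetaAux]⟩
    · exact ⟨0, 1, by simp [zetaAux, h]⟩
  | succ n ih =>
    obtain ⟨u, v, h⟩ := ih
    refine ⟨v + 4 * u, -u, ?_⟩
    rw [zetaAux]; linear_combination h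

lemma zetaAux_form (i : ℕ) (n : ℕ) :
    zetaAux i n ^ 2 - 4 * zetaAux i n * zetaAux i (n + 1) + zetaAux i (n + 1) ^ 2 ∣ 6 := by
  induction n with
  | zero =>
    simp only [zetaAux]
    split_ifs <;> norm_num
  | succ n ih =>
    convert ih using 1
    rw [zetaAux]; ring

lemma zetaAux_growth (i n : ℕ) :
    (n : ℤ) + zetaAux i 1 ≤ zetaAux i (n + 1) ∧ zetaAux i (n + 1) < zetaAux i (n + 2) := by
  have h1 : 0 ≤ zetaAux i 1 := by simp only [zetaAux]; split_ifs <;> norm_num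
  induction n with
  | zero =>
    simp only [zetaAux]
    split_ifs <;> norm_num
  | succ n ih =>
    have e : zetaAux i (n + 1 + 2) = 4 * zetaAux i (n + 2) - zetaAux i (n + 1) := by
      rw [zetaAux]
    rw [e]
    have e' : zetaAux i (n + 1 + 1) = zetaAux i (n + 2) := rfl
    rw [e']
    push_cast
    constructor <;> linarith [ih.1, ih.2]

theorem twelve_defective_families_are_defective (i : ℕ) (hi : i ≤ 3) (k ε : ℤ)
    (hk : 0 ≤ k) (hε : ε = 1 ∨ ε = -1)
    (hexc : ¬ ((i = 0 ∧ k = 0) ∨ (i = 0 ∧ k = 1) ∨ (i = 1 ∧ k = 0) ∨ (i = 2 ∧ k = 0))) :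
    IsDefective 12 (assocFst (zeta i (k - ε)) (-zeta i (k + ε)))
      (assocSnd (zeta i (k - ε)) (-zeta i (k + ε))) := by
  obtain ⟨n, rfl⟩ := Int.eq_ofNat_of_zero_le hk
  have hcop := zetaAux_coprime i n
  have hform := zetaAux_form i n
  have hg := (zetaAux_growth i n).1
  have hrec : zetaAux i (n + 2) = 4 * zetaAux i (n + 1) - zetaAux i n := by rw [zetaAux]
  have z0 : zeta i ((n : ℤ) - 1) = zetaAux i n := by
    unfold zeta; congr 1; omega
  have z2 : zeta i ((n : ℤ) + 1) = zetaAux i (n + 2) := by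
    unfold zeta; congr 1
  have hcase : 2 ≤ zetaAux i (n + 1) ∨ (zetaAux i (n + 1) = 1 ∧ zetaAux i n = -1) := by
    by_cases h0 : i = 0
    · subst h0
      left
      have : zetaAux 0 1 = 0 := by simp [zetaAux]
      omega
    · have h1 : zetaAux i 1 = 1 := by simp [zetaAux, h0]
      rcases Nat.eq_zero_or_pos n with rfl | hn
      · have : i = 3 := by omega
        subst this
        right; simp [zetaAux]
      · left; omega
  rcases hε with rfl | rfl
  · rw [z0, z2]
    have := main_aux (zetaAux i n) (zetaAux i (n + 1)) hcop (by omega) hform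
    rwa [show -zetaAux i (n + 2) = zetaAux i n - 4 * zetaAux i (n + 1) by rw [hrec]; ring]
  · rw [sub_neg_eq_add, ← sub_eq_add_neg, z0, z2]
    have := main_aux (zetaAux i (n + 2)) (zetaAux i (n + 1)) (zetaAux_coprime i (n + 1)).symm
      (by omega) (by
        convert hform using 1
        rw [hrec]; ring)
    rwa [show -zetaAux i n = zetaAux i (n + 2) - 4 * zetaAux i (n + 1) by rw [hrec]; ring]
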